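/- Let f(x₁,...,xₙ) be a real analytic function on a neighborhood of the origin in ℝⁿ, not identically zero. Then there exist η > 0 and a positive integer p such that for every (x₁,...,x_{n−1}) in the (n−1)-dimensional open ball B_{n−1}(0,η) and every s ∈ ℝ, either f(x₁,...,x_{n−1},xₙ) = s for all xₙ with |xₙ| < η, or the equation f(x₁,...,x_{n−1},xₙ) = s has at most p solutions xₙ with |xₙ| < η. -/

import Mathlib

open Set MeasureTheory

/-!
Taking the level `s`, recentred at `f 0`, as an additional coordinate, it suffices to bound the
number of zeros of `t ↦ Φ (y, t)` for `Φ` analytic at the origin. After a rescaling of `t`, the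
coefficients of the expansion `Φ (y, t) = ∑ c_k(y) t ^ k` form an analytic germ `c` with values in
the Banach space of bounded sequences. Finitely many of the `c_k` generate all the others with
uniform control: by induction on the dimension, divide `c` by one of its components, which by the
Weierstrass division theorem leaves remainders depending on fewer variables. The division amounts
to inverting an operator that is close to the identity after another rescaling, and so works with
values in any Banach space. Hence `‖c(y)‖ ≤ C |c_n(y)|` near `0` for some `n` in a finite set, where
`n` may depend on `y`. The `n`-th derivative of `∑ c_k(y) t ^ k` then has no zero near `t = 0`
unless `c(y) = 0`, and Rolle's theorem leaves at most `n` zeros (Bautin's argument).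
-/

open Filter Topology
open scoped BoundedContinuousFunction NNReal ENNReal

universe u

/-- Bounded sequences in `B`, read as the coefficients of power series in one variable that
converge on the open unit ball. -/
abbrev BoundedSeq (B : Type*) [NormedAddCommGroup B] := ℕ →ᵇ B

variable {𝕜 : Type*} [NontriviallyNormedField 𝕜]
  {B : Type*} [NormedAddCommGroup B] [NormedSpace 𝕜 B]
  {E : Type*} [NormedAddCommGroup E] [NormedSpace 𝕜 E]
  {F : Type*} [NormedAddCommGroup F] [NormedSpace 𝕜 F]

/-! ### Power series with bounded coefficients -/

namespace BoundedSeq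

/-- The operator into bounded sequences whose coordinates are the members of a bounded family of
operators. -/
noncomputable def ofFamily (f : ℕ → E →L[𝕜] B) (C : ℝ) (hf : ∀ k, ‖f k‖ ≤ C) :
    E →L[𝕜] BoundedSeq B :=
  LinearMap.mkContinuous
    { toFun := fun x => BoundedContinuousFunction.ofNormedAddCommGroupDiscrete (fun k => f k x)
        (C * ‖x‖) fun k => (f k).le_of_opNorm_le (hf k) x
      map_add' := fun x y => by ext k; simp
      map_smul' := fun a x => by ext k; simp } C fun x =>
    (BoundedContinuousFunction.norm_le
      (mul_nonneg ((norm_nonneg _).trans (hf 0)) (norm_nonneg x))).2 fun k =>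
        (f k).le_of_opNorm_le (hf k) x

@[simp] theorem ofFamily_apply (f : ℕ → E →L[𝕜] B) (C : ℝ) (hf : ∀ k, ‖f k‖ ≤ C) (x : E) (k : ℕ) :
    ofFamily f C hf x k = f k x := rfl

theorem norm_ofFamily_le (f : ℕ → E →L[𝕜] B) (C : ℝ) (hf : ∀ k, ‖f k‖ ≤ C) :
    ‖ofFamily f C hf‖ ≤ C :=
  LinearMap.mkContinuous_norm_le _ ((norm_nonneg _).trans (hf 0)) _

/-- The multilinear analogue of `BoundedSeq.ofFamily`. -/
noncomputable def ofMultilinearFamily {l : ℕ} (f : ℕ → E [×l]→L[𝕜] B) (C : ℝ)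
    (hf : ∀ k, ‖f k‖ ≤ C) : E [×l]→L[𝕜] BoundedSeq B :=
  MultilinearMap.mkContinuous
    { toFun := fun m => BoundedContinuousFunction.ofNormedAddCommGroupDiscrete (fun k => f k m)
        (C * ∏ i, ‖m i‖) fun k => (f k).le_of_opNorm_le (hf k) m
      map_update_add' := fun m i x y => by ext k; simp
      map_update_smul' := fun m i a x => by ext k; simp } C fun m =>
    (BoundedContinuousFunction.norm_le
      (mul_nonneg ((norm_nonneg _).trans (hf 0)) (by positivity))).2 fun k =>
        (f k).le_of_opNorm_le (hf k) m

theorem norm_ofMultilinearFamily_le {l : ℕ} (f : ℕ → E [×l]→L[𝕜] B) (C : ℝ)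
    (hf : ∀ k, ‖f k‖ ≤ C) : ‖ofMultilinearFamily f C hf‖ ≤ C :=
  MultilinearMap.mkContinuous_norm_le _ ((norm_nonneg _).trans (hf 0)) _

variable (𝕜) in
/-- The `k`-th coefficient, as a bounded operator. -/
noncomputable def coeff (k : ℕ) : BoundedSeq B →L[𝕜] B := BoundedContinuousFunction.evalCLM 𝕜 k

@[simp] theorem coeff_apply (k : ℕ) (c : BoundedSeq B) : coeff 𝕜 k c = c k := rfl

theorem norm_coeff_le (k : ℕ) : ‖(coeff 𝕜 k : BoundedSeq B →L[𝕜] B)‖ ≤ 1 :=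
  ContinuousLinearMap.opNorm_le_bound _ zero_le_one fun c => by
    simpa using c.norm_coe_le_norm k

variable (𝕜) in
/-- Removal of the first `n` coefficients, i.e. the quotient on division by the `n`-th power of the
variable. -/
noncomputable def shiftLeft (n : ℕ) : BoundedSeq B →L[𝕜] BoundedSeq B :=
  ofFamily (fun k => coeff 𝕜 (k + n)) 1 fun _ => norm_coeff_le _

variable (𝕜) in
/-- Insertion of `n` zero coefficients, i.e. multiplication by the `n`-th power of the variable. -/
noncomputable def shiftRight (n : ℕ) : BoundedSeq B →L[𝕜] BoundedSeq B :=
  ofFamily (fun k => if n ≤ k then coeff 𝕜 (k - n) else 0) 1 fun k => by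
    split_ifs
    exacts [norm_coeff_le _, norm_zero.trans_le zero_le_one]

/-- Multiplication of the `k`-th coefficient by `q ^ k`, i.e. rescaling of the variable. -/
noncomputable def dilate (q : 𝕜) (hq : ‖q‖ ≤ 1) : BoundedSeq B →L[𝕜] BoundedSeq B :=
  ofFamily (fun k => q ^ k • coeff 𝕜 k) 1 fun k => by
    rw [norm_smul, norm_pow]
    exact mul_le_one₀ (pow_le_one₀ (norm_nonneg q) hq) (norm_nonneg _) (norm_coeff_le k)

@[simp] theorem shiftLeft_apply (n : ℕ) (c : BoundedSeq B) (k : ℕ) :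
    shiftLeft 𝕜 n c k = c (k + n) := rfl

theorem shiftRight_apply_of_lt {n k : ℕ} (hk : k < n) (c : BoundedSeq B) :
    shiftRight 𝕜 n c k = 0 := by
  simp [shiftRight, hk.not_ge]

@[simp] theorem shiftLeft_shiftRight (n : ℕ) (c : BoundedSeq B) :
    shiftLeft 𝕜 n (shiftRight 𝕜 n c) = c := by
  ext k
  simp [shiftRight]

@[simp] theorem dilate_apply (q : 𝕜) (hq : ‖q‖ ≤ 1) (c : BoundedSeq B) (k : ℕ) :
    dilate q hq c k = q ^ k • c k := rfl

theorem norm_shiftLeft_le (n : ℕ) : ‖(shiftLeft 𝕜 n : BoundedSeq B →L[𝕜] BoundedSeq B)‖ ≤ 1 :=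
  norm_ofFamily_le ..

theorem norm_shiftLeft_apply_le (n : ℕ) (c : BoundedSeq B) : ‖shiftLeft 𝕜 n c‖ ≤ ‖c‖ :=
  (BoundedContinuousFunction.norm_le (norm_nonneg c)).2 fun k => c.norm_coe_le_norm (k + n)

theorem norm_shiftRight_le (n : ℕ) : ‖(shiftRight 𝕜 n : BoundedSeq B →L[𝕜] BoundedSeq B)‖ ≤ 1 :=
  norm_ofFamily_le ..

/-- The sum at `t` of the power series with a given coefficient sequence, as an operator on
coefficient sequences. It is meaningful for `‖t‖ < 1`. -/
noncomputable def eval (t : 𝕜) : BoundedSeq B →L[𝕜] B := ∑' k, t ^ k • coeff 𝕜 k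

theorem norm_pow_smul_coeff_le (t : 𝕜) (k : ℕ) :
    ‖t ^ k • (coeff 𝕜 k : BoundedSeq B →L[𝕜] B)‖ ≤ ‖t‖ ^ k := by
  rw [norm_smul, norm_pow]
  exact mul_le_of_le_one_right (by positivity) (norm_coeff_le k)

theorem norm_eval_apply_le {t : 𝕜} (ht : ‖t‖ < 1) (c : BoundedSeq B) :
    ‖eval t c‖ ≤ (1 - ‖t‖)⁻¹ * ‖c‖ :=
  (eval t).le_of_opNorm_le (tsum_of_norm_bounded
    (hasSum_geometric_of_lt_one (norm_nonneg t) ht) (norm_pow_smul_coeff_le t)) c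

variable (𝕜 B) in
/-- The operator `c ↦ (c k • S ^ k)_k`, where `S` is the right shift of sequences in `B`. -/
noncomputable def smulShift :
    BoundedSeq 𝕜 →L[𝕜] BoundedSeq (BoundedSeq B →L[𝕜] BoundedSeq B) :=
  ofFamily (fun k => (coeff 𝕜 k).smulRight (shiftRight 𝕜 k)) 1 fun k => by
    rw [ContinuousLinearMap.norm_smulRight_apply]
    exact mul_le_one₀ (norm_coeff_le k) (norm_nonneg _) (norm_shiftRight_le k)

@[simp] theorem smulShift_apply (c : BoundedSeq 𝕜) (k : ℕ) :
    smulShift 𝕜 B c k = c k • shiftRight 𝕜 k := rfl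

theorem norm_smulShift_apply_le (c : BoundedSeq 𝕜) : ‖smulShift 𝕜 B c‖ ≤ ‖c‖ := by
  simpa only [one_mul] using (smulShift 𝕜 B).le_of_opNorm_le (norm_ofFamily_le ..) c

/-- Multiplication of a `B`-valued power series by the scalar power series with coefficients `c`,
the variable of the latter being rescaled by `q`. The rescaling makes the operator series
`∑ q ^ k c_k S ^ k`, with `S` the right shift, converge in norm for `‖q‖ < 1`. -/
noncomputable def mulOp (q : 𝕜) : BoundedSeq 𝕜 →L[𝕜] BoundedSeq B →L[𝕜] BoundedSeq B :=
  (eval q).comp (smulShift 𝕜 B)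

theorem mulOp_apply (q : 𝕜) (c : BoundedSeq 𝕜) : mulOp q c = eval q (smulShift 𝕜 B c) := rfl

variable [CompleteSpace B]

theorem hasSum_eval {t : 𝕜} (ht : ‖t‖ < 1) :
    HasSum (fun k => t ^ k • (coeff 𝕜 k : BoundedSeq B →L[𝕜] B)) (eval t) :=
  (Summable.of_norm_bounded (summable_geometric_of_lt_one (norm_nonneg t) ht)
    (norm_pow_smul_coeff_le t)).hasSum

theorem hasSum_eval_apply {t : 𝕜} (ht : ‖t‖ < 1) (c : BoundedSeq B) :
    HasSum (fun k => t ^ k • c k) (eval t c) := by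
  simpa only [ContinuousLinearMap.apply_apply, smul_apply, coeff_apply] using
    (ContinuousLinearMap.apply 𝕜 B c).hasSum (hasSum_eval ht)

theorem eval_eq_sum_range_add {t : 𝕜} (ht : ‖t‖ < 1) (n : ℕ) (c : BoundedSeq B) :
    eval t c = ∑ k ∈ Finset.range n, t ^ k • c k + t ^ n • eval t (shiftLeft 𝕜 n c) := by
  have htail := (hasSum_eval_apply ht (shiftLeft 𝕜 n c)).const_smul (t ^ n)
  simp only [shiftLeft_apply, smul_smul, ← pow_add, add_comm n] at htail
  rw [add_comm, ← sub_eq_iff_eq_add]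
  exact ((hasSum_nat_add_iff' n).2 (hasSum_eval_apply ht c)).unique htail

theorem eval_shiftRight {t : 𝕜} (ht : ‖t‖ < 1) (n : ℕ) (c : BoundedSeq B) :
    eval t (shiftRight 𝕜 n c) = t ^ n • eval t c := by
  rw [eval_eq_sum_range_add ht n, shiftLeft_shiftRight, add_eq_right]
  exact Finset.sum_eq_zero fun k hk => by
    rw [shiftRight_apply_of_lt (Finset.mem_range.1 hk), smul_zero]

theorem eval_sub_shiftRight_shiftLeft {t : 𝕜} (ht : ‖t‖ < 1) (n : ℕ) (c : BoundedSeq B) :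
    eval t (c - shiftRight 𝕜 n (shiftLeft 𝕜 n c)) = ∑ k ∈ Finset.range n, t ^ k • c k := by
  rw [map_sub, eval_shiftRight ht, eval_eq_sum_range_add ht n c, add_sub_cancel_right]

theorem eval_dilate {q t : 𝕜} (hq : ‖q‖ ≤ 1) (ht : ‖t‖ < 1) (c : BoundedSeq B) :
    eval t (dilate q hq c) = eval (q * t) c := by
  have hqt : ‖q * t‖ < 1 := by
    rw [norm_mul]; exact mul_lt_one_of_nonneg_of_lt_one_right hq (norm_nonneg t) ht
  refine (hasSum_eval_apply ht _).unique ?_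
  simpa only [dilate_apply, smul_smul, mul_pow, mul_comm] using hasSum_eval_apply hqt c

variable (𝕜 B) in
/-- The power series of `BoundedSeq.eval` at the origin. -/
noncomputable def evalSeries : FormalMultilinearSeries 𝕜 𝕜 (BoundedSeq B →L[𝕜] B) :=
  fun k => ContinuousMultilinearMap.mkPiRing 𝕜 (Fin k) (coeff 𝕜 k)

theorem hasFPowerSeriesAt_eval :
    HasFPowerSeriesAt (eval : 𝕜 → BoundedSeq B →L[𝕜] B) (evalSeries 𝕜 B) 0 := by
  refine hasFPowerSeriesAt_iff.2 ?_
  filter_upwards [Metric.ball_mem_nhds (0 : 𝕜) one_pos] with t ht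
  simpa [FormalMultilinearSeries.coeff, evalSeries] using
    hasSum_eval (B := B) (mem_ball_zero_iff.1 ht)

theorem analyticAt_eval : AnalyticAt 𝕜 (eval : 𝕜 → BoundedSeq B →L[𝕜] B) 0 :=
  hasFPowerSeriesAt_eval.analyticAt

theorem eval_mulOp_apply [CompleteSpace 𝕜] {q t : 𝕜} (hq : ‖q‖ < 1) (ht : ‖t‖ < 1)
    (c : BoundedSeq 𝕜) (x : BoundedSeq B) : eval t (mulOp q c x) = eval (q * t) c • eval t x := by
  have hqt : ‖q * t‖ < 1 := by
    rw [norm_mul]; exact mul_lt_one_of_nonneg_of_lt_one_right hq.le (norm_nonneg t) ht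
  have hleft := (eval t).hasSum
    ((ContinuousLinearMap.apply 𝕜 (BoundedSeq B) x).hasSum
      (hasSum_eval_apply hq (smulShift 𝕜 B c)))
  have hright := (hasSum_eval_apply hqt c).smul_const (eval t x)
  refine hleft.unique ?_
  convert hright using 2 with k
  simp only [smulShift_apply, map_smul, ContinuousLinearMap.apply_apply, eval_shiftRight ht,
    smul_smul, smul_eq_mul]
  ring_nf

theorem norm_mulOp_sub_le {q : 𝕜} (hq : ‖q‖ < 1) {c : BoundedSeq 𝕜} {e : ℕ}
    (hc : ∀ k < e, c k = 0) :
    ‖mulOp q c - (q ^ e * c e) • (shiftRight 𝕜 e : BoundedSeq B →L[𝕜] BoundedSeq B)‖ ≤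
      ‖q‖ ^ (e + 1) * ((1 - ‖q‖)⁻¹ * ‖c‖) := by
  have hhead : ∑ k ∈ Finset.range (e + 1), q ^ k • smulShift 𝕜 B c k =
      (q ^ e * c e) • shiftRight 𝕜 e := by
    rw [Finset.sum_range_succ, Finset.sum_eq_zero, zero_add, smulShift_apply, smul_smul]
    intro k hk
    rw [smulShift_apply, hc k (Finset.mem_range.1 hk), zero_smul, smul_zero]
  rw [mulOp_apply, eval_eq_sum_range_add hq (e + 1), hhead, add_sub_cancel_left, norm_smul,
    norm_pow]
  gcongr
  refine (norm_eval_apply_le hq _).trans ?_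
  gcongr
  exact (norm_shiftLeft_apply_le _ _).trans (norm_smulShift_apply_le c)

theorem exists_norm_mulOp_sub_lt {c : BoundedSeq 𝕜} {e : ℕ} (hc : ∀ k < e, c k = 0)
    (he : c e ≠ 0) :
    ∃ q : 𝕜, q ≠ 0 ∧ ‖q‖ < 1 ∧ ‖(q ^ e * c e)⁻¹ • mulOp q c -
      (shiftRight 𝕜 e : BoundedSeq B →L[𝕜] BoundedSeq B)‖ < 1 := by
  have hcont : ContinuousAt (fun q : 𝕜 => ‖q‖ * ((1 - ‖q‖)⁻¹ * ‖c‖)) 0 := by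
    fun_prop (disch := simp)
  have hsmall : ∀ᶠ q : 𝕜 in 𝓝[≠] 0, ‖q‖ * ((1 - ‖q‖)⁻¹ * ‖c‖) < ‖c e‖ :=
    (hcont.eventually_lt_const (by simpa using he)).filter_mono nhdsWithin_le_nhds
  have hone : ∀ᶠ q : 𝕜 in 𝓝[≠] 0, ‖q‖ < 1 :=
    (continuousAt_id.norm.eventually_lt_const (by simp)).filter_mono nhdsWithin_le_nhds
  obtain ⟨q, hqc, hq1, hq0⟩ := (hsmall.and (hone.and eventually_mem_nhdsWithin)).exists
  have hlead : q ^ e * c e ≠ 0 := mul_ne_zero (pow_ne_zero e hq0) he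
  have hnorm : ‖mulOp q c - (q ^ e * c e) • (shiftRight 𝕜 e : BoundedSeq B →L[𝕜] BoundedSeq B)‖ <
      ‖q ^ e * c e‖ :=
    calc _ ≤ ‖q‖ ^ (e + 1) * ((1 - ‖q‖)⁻¹ * ‖c‖) := norm_mulOp_sub_le hq1 hc
      _ = ‖q‖ ^ e * (‖q‖ * ((1 - ‖q‖)⁻¹ * ‖c‖)) := by ring
      _ < ‖q‖ ^ e * ‖c e‖ := mul_lt_mul_of_pos_left hqc (pow_pos (norm_pos_iff.2 hq0) e)
      _ = ‖q ^ e * c e‖ := by rw [norm_mul, norm_pow]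
  have hfactor : (q ^ e * c e)⁻¹ • mulOp q c -
      (shiftRight 𝕜 e : BoundedSeq B →L[𝕜] BoundedSeq B) =
        (q ^ e * c e)⁻¹ • (mulOp q c - (q ^ e * c e) • shiftRight 𝕜 e) := by
    rw [smul_sub, inv_smul_smul₀ hlead]
  refine ⟨q, hq0, hq1, ?_⟩
  rwa [hfactor, norm_smul, norm_inv, inv_mul_lt_one₀ (norm_pos_iff.2 hlead)]

end BoundedSeq

/-! ### Expansion of a germ in the last variable -/

theorem norm_changeOriginSeries_le (p : FormalMultilinearSeries 𝕜 E B) (k l : ℕ) :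
    ‖p.changeOriginSeries k l‖ ≤ (k + l).choose l * ‖p (k + l)‖ := by
  have h := p.nnnorm_changeOriginSeries_le_tsum k l
  rw [tsum_fintype, Finset.sum_const, Finset.card_univ, Fintype.card_finset_len, Fintype.card_fin,
    nsmul_eq_mul] at h
  exact_mod_cast h

theorem exists_norm_changeOriginSeries_mul_pow_le (p : FormalMultilinearSeries 𝕜 E B) {r s : ℝ≥0}
    (h : ((r + s : ℝ≥0) : ℝ≥0∞) < p.radius) :
    ∃ K : ℝ, ∀ k l, ‖p.changeOriginSeries k l‖ * s ^ k * r ^ l ≤ K := by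
  obtain ⟨K, -, hK⟩ := p.norm_mul_pow_le_of_lt_radius h
  refine ⟨K, fun k l => ?_⟩
  have hbinom : ((k + l).choose l : ℝ) * (s ^ k * r ^ l) ≤ (r + s) ^ (k + l) := by
    have hterm := Finset.single_le_sum
      (f := fun i => (r : ℝ) ^ i * s ^ (k + l - i) * (k + l).choose i)
      (fun i _ => by positivity) (Finset.mem_range.2 (show l < k + l + 1 by omega))
    rw [← add_pow, Nat.add_sub_cancel] at hterm
    linarith
  calc ‖p.changeOriginSeries k l‖ * s ^ k * r ^ l
      ≤ (k + l).choose l * ‖p (k + l)‖ * s ^ k * r ^ l := by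
        gcongr; exact norm_changeOriginSeries_le p k l
    _ = ‖p (k + l)‖ * ((k + l).choose l * (s ^ k * r ^ l)) := by ring
    _ ≤ ‖p (k + l)‖ * (r + s) ^ (k + l) := by gcongr
    _ ≤ K := hK (k + l)

/-- The power series in `y` of `p.changeOrigin (y, 0) k (w, …, w)`, where `w` is read as the vector
`(0, w)`: the part of degree `k` in the direction `w` of a power series in two variables. -/
noncomputable def sliceSeries (p : FormalMultilinearSeries 𝕜 (E × F) B) (w : F)
    (k : ℕ) : FormalMultilinearSeries 𝕜 E B := fun l =>
  (ContinuousMultilinearMap.apply 𝕜 (fun _ : Fin k => E × F) B fun _ => (0, w))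
    |>.compContinuousMultilinearMap <|
      (p.changeOriginSeries k l).compContinuousLinearMap fun _ => .inl 𝕜 E F

theorem norm_sliceSeries_le (p : FormalMultilinearSeries 𝕜 (E × F) B) (w : F) (k l : ℕ) :
    ‖sliceSeries p w k l‖ ≤ ‖p.changeOriginSeries k l‖ * ‖w‖ ^ k := by
  refine ContinuousMultilinearMap.opNorm_le_bound (by positivity) fun y => ?_
  have hvert := (p.changeOriginSeries k l fun i => (y i, 0)).le_opNorm fun _ => ((0 : E), w)
  have hhor := (p.changeOriginSeries k l).le_opNorm fun i => (y i, (0 : F))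
  simp only [Prod.norm_mk, norm_zero, norm_nonneg, sup_of_le_left, sup_of_le_right,
    Finset.prod_const, Finset.card_univ, Fintype.card_fin] at hvert hhor
  calc ‖sliceSeries p w k l y‖
      ≤ ‖p.changeOriginSeries k l fun i => (y i, 0)‖ * ‖w‖ ^ k := hvert
    _ ≤ ‖p.changeOriginSeries k l‖ * (∏ i, ‖y i‖) * ‖w‖ ^ k := by gcongr
    _ = _ := by ring

theorem hasSum_sliceSeries [CompleteSpace B] (p : FormalMultilinearSeries 𝕜 (E × F) B) (w : F)
    (k : ℕ) {y : E} (hy : ‖y‖ₑ < p.radius) :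
    HasSum (fun l => sliceSeries p w k l fun _ => y) (p.changeOrigin (y, 0) k fun _ => (0, w)) := by
  have hy0 : ((y, 0) : E × F) ∈ Metric.eball 0 p.radius := by
    simpa [enorm_eq_nnnorm, Prod.nnnorm_def] using hy
  have h := (p.hasFPowerSeriesOnBall_changeOrigin k (pos_of_gt hy)).hasSum hy0
  rw [zero_add] at h
  exact ContinuousMultilinearMap.hasSum_eval h fun _ => (0, w)

theorem BoundedSeq.exists_analyticAt_hasSum [CompleteSpace B]
    (p : ℕ → FormalMultilinearSeries 𝕜 E B) {r : ℝ≥0} (hr : 0 < r) {K : ℝ}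
    (hp : ∀ k l, ‖p k l‖ * r ^ l ≤ K) :
    ∃ Ψ : E → BoundedSeq B, AnalyticAt 𝕜 Ψ 0 ∧
      ∀ y ∈ Metric.eball 0 r, ∀ k, HasSum (fun l => p k l fun _ => y) (Ψ y k) := by
  have hbound : ∀ l k, ‖p k l‖ ≤ K / r ^ l := fun l k => (le_div_iff₀ (by positivity)).2 (hp k l)
  let P : FormalMultilinearSeries 𝕜 E (BoundedSeq B) := fun l =>
    ofMultilinearFamily (fun k => p k l) (K / r ^ l) (hbound l)
  have hradius : (r : ℝ≥0∞) ≤ P.radius := P.le_radius_of_bound K fun l =>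
    (le_div_iff₀ (by positivity)).1 (norm_ofMultilinearFamily_le ..)
  have hP := (P.hasFPowerSeriesOnBall ((ENNReal.coe_pos.2 hr).trans_le hradius)).mono
    (ENNReal.coe_pos.2 hr) hradius
  refine ⟨P.sum, hP.analyticAt, fun y hy k => ?_⟩
  have hsum := (coeff 𝕜 k).hasSum (hP.hasSum hy)
  rwa [zero_add] at hsum

theorem hasSum_changeOrigin_vertical [CompleteSpace B] {p : FormalMultilinearSeries 𝕜 (E × F) B}
    {R : ℝ≥0∞} {Φ : E × F → B} (hp : HasFPowerSeriesOnBall Φ p 0 R) {y : E} {w : F}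
    (h : ‖y‖ₑ + ‖w‖ₑ < R) :
    HasSum (fun k => p.changeOrigin (y, 0) k fun _ => (0, w)) (Φ (y, w)) := by
  have hy : ‖((y, 0) : E × F)‖ₑ = ‖y‖ₑ := by simp [enorm_eq_nnnorm, Prod.nnnorm_def]
  have hw : ‖((0, w) : E × F)‖ₑ = ‖w‖ₑ := by simp [enorm_eq_nnnorm, Prod.nnnorm_def]
  have hmem : ((0, w) : E × F) ∈ Metric.eball 0 (R - ‖((y, 0) : E × F)‖₊) := by
    rw [mem_eball_zero_iff, ← enorm_eq_nnnorm, hy, hw, lt_tsub_iff_left]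
    exact h
  have hyR : (‖((y, 0) : E × F)‖₊ : ℝ≥0∞) < R := by
    rw [← enorm_eq_nnnorm, hy]; exact le_self_add.trans_lt h
  simpa using (hp.changeOrigin hyR).hasSum hmem

open BoundedSeq in
theorem eventually_exists_curry [CompleteSpace B] {Φ : E × 𝕜 → B} (hΦ : AnalyticAt 𝕜 Φ 0) :
    ∀ᶠ ρ in 𝓝[≠] (0 : 𝕜), ∃ Ψ : E → BoundedSeq B, AnalyticAt 𝕜 Ψ 0 ∧
      ∀ᶠ z in 𝓝 0, Φ z = eval (z.2 / ρ) (Ψ z.1) := by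
  obtain ⟨p, R, hp⟩ := hΦ
  obtain ⟨r, hr0, hrR⟩ := ENNReal.lt_iff_exists_nnreal_btwn.1 hp.r_pos
  have hr : 0 < r / 2 := half_pos (ENNReal.coe_pos.1 hr0)
  have hsmall : ∀ᶠ ρ in 𝓝[≠] (0 : 𝕜), ‖ρ‖₊ < r / 2 :=
    (continuousAt_id.nnnorm.eventually_lt_const (by simpa using hr)).filter_mono nhdsWithin_le_nhds
  filter_upwards [hsmall, eventually_mem_nhdsWithin] with ρ hρ hρ0
  have hsum : ((r / 2 + ‖ρ‖₊ : ℝ≥0) : ℝ≥0∞) < R := by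
    refine lt_of_le_of_lt (ENNReal.coe_le_coe.2 ?_) hrR
    simpa only [add_halves] using add_le_add_right hρ.le (r / 2)
  obtain ⟨K, hK⟩ := exists_norm_changeOriginSeries_mul_pow_le p (hsum.trans_le hp.r_le)
  obtain ⟨Ψ, hΨ, hΨsum⟩ := exists_analyticAt_hasSum (sliceSeries p ρ) hr fun k l =>
    (mul_le_mul_of_nonneg_right (norm_sliceSeries_le p ρ k l) (by positivity)).trans (hK k l)
  refine ⟨Ψ, hΨ, ?_⟩
  filter_upwards [prod_mem_nhds (Metric.eball_mem_nhds (0 : E) (ENNReal.coe_pos.2 hr))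
    (Metric.ball_mem_nhds (0 : 𝕜) (norm_pos_iff.2 hρ0))] with ⟨y, t⟩ ⟨hy, ht⟩
  rw [mem_ball_zero_iff] at ht
  have hyt : ‖y‖ₑ + ‖t‖ₑ < R :=
    (add_le_add (mem_eball_zero_iff.1 hy).le (ENNReal.coe_le_coe.2 ht.le)).trans_lt hsum
  have hyp : ‖y‖ₑ < p.radius := (le_self_add.trans_lt hyt).trans_le hp.r_le
  have hcoeff : ∀ k, Ψ y k = p.changeOrigin (y, 0) k fun _ => (0, ρ) := fun k =>
    (hΨsum y hy k).unique (hasSum_sliceSeries p ρ k hyp)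
  have ht1 : ‖t / ρ‖ < 1 := by
    rwa [norm_div, div_lt_one (norm_pos_iff.2 hρ0)]
  refine (hasSum_changeOrigin_vertical hp hyt).unique ?_
  convert hasSum_eval_apply ht1 (Ψ y) using 2 with k
  have hvec : (fun _ : Fin k => ((0 : E), t)) = fun _ => (t / ρ) • ((0 : E), ρ) := by
    simp [div_mul_cancel₀ t hρ0]
  rw [hcoeff, hvec, ContinuousMultilinearMap.map_smul_univ, Finset.prod_const, Finset.card_univ,
    Fintype.card_fin]

/-! ### Weierstrass division -/

theorem analyticAt_clm_apply {T : E → F →L[𝕜] B} {u : E → F} {x : E} (hT : AnalyticAt 𝕜 T x)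
    (hu : AnalyticAt 𝕜 u x) : AnalyticAt 𝕜 (fun y => T y (u y)) x :=
  AnalyticAt.fun_comp (g := fun p : (F →L[𝕜] B) × F => p.1 p.2) (f := fun y => (T y, u y))
    ((ContinuousLinearMap.id 𝕜 (F →L[𝕜] B)).analyticAt_bilinear (T x, u x)) (hT.prod hu)

theorem analyticAt_ringInverse_comp {A : Type*} [NormedRing A] [NormedAlgebra 𝕜 A] [CompleteSpace A]
    {u : E → A} {x : E} (hu : AnalyticAt 𝕜 u x) (h : IsUnit (u x)) :
    AnalyticAt 𝕜 (fun y => Ring.inverse (u y)) x := by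
  obtain ⟨v, hv⟩ := h
  exact AnalyticAt.fun_comp (hv ▸ analyticAt_inverse v) hu

theorem isUnit_of_norm_one_sub_lt_one {A : Type*} [NormedRing A] [HasSummableGeomSeries A]
    {a : A} (h : ‖1 - a‖ < 1) : IsUnit a := by
  simpa using isUnit_one_sub_of_norm_lt_one h

namespace BoundedSeq

/-- The operator inverted in Weierstrass division by the power series with coefficients `c`. A
sequence `x` encodes the remainder `x 0, …, x (e - 1)` and the quotient `shiftLeft 𝕜 e x`; its image
is the dividend. The factor `a` and the rescaling `q` serve to make the operator close to `1`. -/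
noncomputable def divisionOp (q a : 𝕜) (e : ℕ) (c : BoundedSeq 𝕜) :
    BoundedSeq B →L[𝕜] BoundedSeq B :=
  1 + (a • mulOp q c - shiftRight 𝕜 e) * shiftLeft 𝕜 e

theorem eval_divisionOp_apply [CompleteSpace 𝕜] [CompleteSpace B] {q t : 𝕜}
    (hq : ‖q‖ < 1) (ht : ‖t‖ < 1) (a : 𝕜) (e : ℕ) (c : BoundedSeq 𝕜) (x : BoundedSeq B) :
    eval t (divisionOp q a e c x) =
      eval (q * t) c • eval t (a • shiftLeft 𝕜 e x) + ∑ i ∈ Finset.range e, t ^ i • x i := by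
  have hx : divisionOp q a e c x = mulOp q c (a • shiftLeft 𝕜 e x) +
      (x - shiftRight 𝕜 e (shiftLeft 𝕜 e x)) := by
    rw [map_smul]
    change x + (a • mulOp q c (shiftLeft 𝕜 e x) - shiftRight 𝕜 e (shiftLeft 𝕜 e x)) = _
    abel
  rw [hx, map_add, eval_mulOp_apply hq ht, eval_sub_shiftRight_shiftLeft ht]

theorem isUnit_divisionOp [CompleteSpace B] {q a : 𝕜} {e : ℕ} {c : BoundedSeq 𝕜}
    (h : ‖a • mulOp q c - (shiftRight 𝕜 e : BoundedSeq B →L[𝕜] BoundedSeq B)‖ < 1) :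
    IsUnit (divisionOp q a e c : BoundedSeq B →L[𝕜] BoundedSeq B) := by
  refine isUnit_of_norm_one_sub_lt_one ?_
  rw [divisionOp, sub_add_cancel_left, norm_neg]
  exact (norm_mul_le _ _).trans_lt
    ((mul_le_of_le_one_right (norm_nonneg _) (norm_shiftLeft_le e)).trans_lt h)

theorem analyticAt_divisionOp_comp (q a : 𝕜) (e : ℕ) {W : E → BoundedSeq 𝕜} {x : E}
    (hW : AnalyticAt 𝕜 W x) :
    AnalyticAt 𝕜 (fun y => (divisionOp q a e (W y) : BoundedSeq B →L[𝕜] BoundedSeq B)) x := by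
  have hmul : AnalyticAt 𝕜 (fun y => (mulOp q (W y) : BoundedSeq B →L[𝕜] BoundedSeq B)) x :=
    ((mulOp q : BoundedSeq 𝕜 →L[𝕜] BoundedSeq B →L[𝕜] BoundedSeq B).analyticAt _).fun_comp hW
  exact analyticAt_const.fun_add
    (((analyticAt_const.fun_smul hmul).fun_sub analyticAt_const).fun_mul analyticAt_const)

theorem exists_division [CompleteSpace 𝕜] [CompleteSpace B] {Φ : E → BoundedSeq B}
    {W : E → BoundedSeq 𝕜} (hΦ : AnalyticAt 𝕜 Φ 0) (hW : AnalyticAt 𝕜 W 0) (hW0 : W 0 ≠ 0) :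
    ∃ (e : ℕ) (q : 𝕜) (Q R : E → BoundedSeq B), q ≠ 0 ∧ AnalyticAt 𝕜 Q 0 ∧
      AnalyticAt 𝕜 R 0 ∧ ∀ᶠ y in 𝓝 0, ∀ t : 𝕜, ‖t‖ < 1 → eval (q * t) (Φ y) =
        eval (q * t) (W y) • eval t (Q y) + ∑ i ∈ Finset.range e, t ^ i • R y i := by
  classical
  have hex : ∃ k, W 0 k ≠ 0 := by
    by_contra! hzero
    exact hW0 (DFunLike.ext _ _ hzero)
  set e := Nat.find hex
  obtain ⟨q, hq0, hq, hnear⟩ := exists_norm_mulOp_sub_lt (B := B)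
    (fun k hk => not_not.1 (Nat.find_min hex hk)) (Nat.find_spec hex)
  set a := (q ^ e * W 0 e)⁻¹
  have hM := analyticAt_divisionOp_comp (B := B) q a e hW
  have hunit := isUnit_divisionOp hnear
  let R : E → BoundedSeq B := fun y => Ring.inverse (divisionOp q a e (W y)) (dilate q hq.le (Φ y))
  have hR : AnalyticAt 𝕜 R 0 := analyticAt_clm_apply (analyticAt_ringInverse_comp hM hunit)
    (((dilate q hq.le).analyticAt _).fun_comp hΦ)
  have hMR : ∀ᶠ y in 𝓝 0, divisionOp q a e (W y) (R y) = dilate q hq.le (Φ y) := by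
    filter_upwards [hM.continuousAt.eventually (Units.isOpen.mem_nhds hunit)] with y hy
    exact DFunLike.congr_fun (Ring.mul_inverse_cancel _ hy) _
  refine ⟨e, q, fun y => a • shiftLeft 𝕜 e (R y), R, hq0,
    analyticAt_const.fun_smul (((shiftLeft 𝕜 e).analyticAt _).fun_comp hR), hR, ?_⟩
  filter_upwards [hMR] with y hy t ht
  rw [← eval_dilate hq.le ht, ← hy, eval_divisionOp_apply hq ht]

end BoundedSeq

open BoundedSeq in
theorem exists_weierstrass_division [CompleteSpace 𝕜] [CompleteSpace B] {Φ : E × 𝕜 → B}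
    {W : E × 𝕜 → 𝕜} (hΦ : AnalyticAt 𝕜 Φ 0) (hW : AnalyticAt 𝕜 W 0)
    (hW0 : ¬ ∀ᶠ t in 𝓝 (0 : 𝕜), W (0, t) = 0) :
    ∃ (e : ℕ) (Q : E × 𝕜 → B) (r : ℕ → E → B), AnalyticAt 𝕜 Q 0 ∧
      (∀ i, AnalyticAt 𝕜 (r i) 0) ∧
      ∀ᶠ z in 𝓝 0, Φ z = W z • Q z + ∑ i ∈ Finset.range e, z.2 ^ i • r i z.1 := by
  obtain ⟨ρ, ⟨Ψ, hΨ, hΦΨ⟩, V, hV, hWV⟩ :=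
    ((eventually_exists_curry hΦ).and (eventually_exists_curry hW)).exists
  have hV0 : V 0 ≠ 0 := by
    intro hV0
    have ht : Tendsto (fun t : 𝕜 => ((0 : E), t)) (𝓝 0) (𝓝 0) :=
      (Continuous.prodMk_right (0 : E)).tendsto' _ _ rfl
    refine hW0 ((ht.eventually hWV).mono fun t h => ?_)
    rw [h, hV0, map_zero]
  obtain ⟨e, q, Q, R, hq0, hQ, hR, hdiv⟩ := exists_division hΨ hV hV0
  have hscale : AnalyticAt 𝕜 (fun z : E × 𝕜 => z.2 / (q * ρ)) 0 := analyticAt_snd.div_const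
  refine ⟨e, fun z => eval (z.2 / (q * ρ)) (Q z.1), fun i y => ((q * ρ) ^ i)⁻¹ • R y i, ?_,
    fun i => analyticAt_const.fun_smul (((coeff 𝕜 i).analyticAt _).fun_comp hR), ?_⟩
  · have heval : AnalyticAt 𝕜 (fun z : E × 𝕜 => (eval (z.2 / (q * ρ)) : BoundedSeq B →L[𝕜] B)) 0 :=
      AnalyticAt.fun_comp (by simpa using analyticAt_eval) hscale
    exact analyticAt_clm_apply heval (AnalyticAt.fun_comp (g := Q) hQ analyticAt_fst)
  · have hlt : ∀ᶠ z in 𝓝 (0 : E × 𝕜), ‖z.2 / (q * ρ)‖ < 1 :=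
      hscale.continuousAt.norm.eventually_lt_const (by simp)
    have hfst : Tendsto (Prod.fst : E × 𝕜 → E) (𝓝 0) (𝓝 0) := continuous_fst.tendsto' _ _ rfl
    filter_upwards [hlt, hΦΨ, hWV, hfst.eventually hdiv] with z hz hΦz hWz hdivz
    have hqt : q * (z.2 / (q * ρ)) = z.2 / ρ := by
      rw [mul_div_assoc', mul_div_mul_left _ _ hq0]
    rw [hΦz, hWz, ← hqt, hdivz _ hz]
    congr 1
    refine Finset.sum_congr rfl fun i _ => ?_
    rw [smul_smul, div_pow, div_eq_mul_inv]

/-! ### Finite generation -/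

/-- Finite sums of operators `b ↦ L i b • h y` of rank one that depend on `y` through a map `h`
analytic at the origin. A germ `Φ` fixed by such a sum is recovered from finitely many of its
scalar components `L i ∘ Φ`; germs fixed by the same sum are recovered by the same formula. -/
def componentOperators {ι : Type*} (L : ι → B →L[𝕜] 𝕜) : AddSubmonoid (E → B →L[𝕜] B) :=
  AddSubmonoid.closure
    {P | ∃ (i : ι) (h : E → B), AnalyticAt 𝕜 h 0 ∧ P = fun y => (L i).smulRight (h y)}

section componentOperators

variable {ι : Type*} {L : ι → B →L[𝕜] 𝕜}

theorem smulRight_mem_componentOperators (i : ι) {h : E → B} (hh : AnalyticAt 𝕜 h 0) :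
    (fun y => (L i).smulRight (h y)) ∈ componentOperators L :=
  AddSubmonoid.subset_closure ⟨i, h, hh, rfl⟩

theorem analyticAt_of_mem_componentOperators {P : E → B →L[𝕜] B} (hP : P ∈ componentOperators L) :
    AnalyticAt 𝕜 P 0 := by
  induction hP using AddSubmonoid.closure_induction with
  | mem P hP =>
    obtain ⟨i, h, hh, rfl⟩ := hP
    exact ((ContinuousLinearMap.smulRightL 𝕜 B B (L i)).analyticAt _).fun_comp hh
  | zero => exact analyticAt_const
  | add P Q _ _ hP hQ => exact hP.add hQ

theorem mul_mem_componentOperators {A P : E → B →L[𝕜] B} (hA : AnalyticAt 𝕜 A 0)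
    (hP : P ∈ componentOperators L) : A * P ∈ componentOperators L := by
  induction hP using AddSubmonoid.closure_induction with
  | mem P hP =>
    obtain ⟨i, h, hh, rfl⟩ := hP
    convert smulRight_mem_componentOperators i (analyticAt_clm_apply hA hh) using 1
    ext y b
    simp
  | zero => simp
  | add P Q _ _ hP hQ => simpa only [mul_add] using add_mem hP hQ

theorem comp_mem_componentOperators {P : E → B →L[𝕜] B} (hP : P ∈ componentOperators L)
    (T : F →L[𝕜] E) : P ∘ T ∈ componentOperators L := by
  induction hP using AddSubmonoid.closure_induction with
  | mem P hP =>
    obtain ⟨i, h, hh, rfl⟩ := hP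
    refine smulRight_mem_componentOperators i (h := h ∘ T) (AnalyticAt.comp ?_ (T.analyticAt 0))
    rwa [map_zero]
  | zero => exact zero_mem _
  | add P Q _ _ hP hQ => exact add_mem hP hQ

theorem exists_componentOperators_apply_eq_of_forall
    (h : ∀ Φ : E → B, AnalyticAt 𝕜 Φ 0 → ∃ P ∈ componentOperators L, ∀ᶠ y in 𝓝 0, P y (Φ y) = Φ y)
    {α : Type*} {Φ : α → E → B} (hΦ : ∀ a, AnalyticAt 𝕜 (Φ a) 0) (s : Finset α) :
    ∃ P ∈ componentOperators L, ∀ a ∈ s, ∀ᶠ y in 𝓝 0, P y (Φ a y) = Φ a y := by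
  classical
  induction s using Finset.induction_on with
  | empty => exact ⟨0, zero_mem _, by simp⟩
  | insert a s _ ih =>
    obtain ⟨P, hP, hPΦ⟩ := ih
    have hPan := analyticAt_of_mem_componentOperators hP
    obtain ⟨Q, hQ, hQΦ⟩ := h _ ((hΦ a).fun_sub (analyticAt_clm_apply hPan (hΦ a)))
    have hQan := analyticAt_of_mem_componentOperators hQ
    have happly : ∀ y b, (Q + (1 - Q) * P) y b = Q y (b - P y b) + P y b := fun y b => by
      simp only [Pi.add_apply, Pi.mul_apply, Pi.sub_apply, Pi.one_apply, add_apply,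
        mul_apply_eq_comp, sub_apply, one_apply_eq_self, map_sub]
      abel
    refine ⟨Q + (1 - Q) * P, add_mem hQ (mul_mem_componentOperators
      (analyticAt_const.sub hQan) hP), Finset.forall_mem_insert .. |>.2 ⟨?_, fun i hi => ?_⟩⟩
    · filter_upwards [hQΦ] with y hy
      rw [happly, hy, sub_add_cancel]
    · filter_upwards [hPΦ i hi] with y hy
      rw [happly, hy, sub_self, map_zero, zero_add]

theorem exists_componentOperators_apply_eq_prod [CompleteSpace 𝕜] [CompleteSpace B]
    (h : ∀ Φ : E → B, AnalyticAt 𝕜 Φ 0 → ∃ P ∈ componentOperators L, ∀ᶠ y in 𝓝 0, P y (Φ y) = Φ y)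
    {Φ : E × 𝕜 → B} (hΦ : AnalyticAt 𝕜 Φ 0) {i : ι}
    (hi : ¬ ∀ᶠ t in 𝓝 (0 : 𝕜), L i (Φ (0, t)) = 0) :
    ∃ P ∈ componentOperators L, ∀ᶠ z in 𝓝 0, P z (Φ z) = Φ z := by
  -- Divide `Φ` by its own component `L i ∘ Φ`. If `P` fixes the remainders, which do not involve
  -- the last variable, then `1 - P` sends `Φ` to `L i (Φ z) • (1 - P) Q`.
  obtain ⟨e, Q, r, hQ, hr, hdiv⟩ :=
    exists_weierstrass_division hΦ (((L i).analyticAt _).fun_comp hΦ) hi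
  obtain ⟨P, hP, hPr⟩ := exists_componentOperators_apply_eq_of_forall h hr (Finset.range e)
  have hPfst := comp_mem_componentOperators hP (ContinuousLinearMap.fst 𝕜 E 𝕜)
  have hfst : Tendsto (Prod.fst : E × 𝕜 → E) (𝓝 0) (𝓝 0) := continuous_fst.tendsto' _ _ rfl
  refine ⟨_, add_mem hPfst (smulRight_mem_componentOperators i (hQ.fun_sub
    (analyticAt_clm_apply (analyticAt_of_mem_componentOperators hPfst) hQ))), ?_⟩
  filter_upwards [hdiv, hfst.eventually ((Finset.eventually_all _).2 hPr)] with z hz hPz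
  have hPΦ : P z.1 (Φ z) = L i (Φ z) • P z.1 (Q z) +
      ∑ j ∈ Finset.range e, z.2 ^ j • r j z.1 := by
    conv_lhs => rw [hz]
    simp only [map_add, map_smul, map_sum]
    congr 1
    exact Finset.sum_congr rfl fun j hj => by rw [hPz j hj]
  change P z.1 (Φ z) + L i (Φ z) • (Q z - P z.1 (Q z)) = Φ z
  conv_rhs => rw [hz]
  rw [hPΦ, smul_sub]
  abel

theorem exists_line_component_ne_zero (hL : ∀ b, (∀ i, L i b = 0) → b = 0) {Φ : E → B}
    (hΦ : AnalyticAt 𝕜 Φ 0) (h0 : ¬ ∀ᶠ y in 𝓝 0, Φ y = 0) :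
    ∃ i v, ¬ ∀ᶠ t in 𝓝 (0 : 𝕜), L i (Φ (t • v)) = 0 := by
  by_contra! hline
  obtain ⟨p, hp⟩ := hΦ
  have hdiag : ∀ n v, (p n fun _ => v) = 0 := fun n v => hL _ fun i => by
    let l := ContinuousLinearMap.toSpanSingleton 𝕜 v
    obtain ⟨R, hpl⟩ : HasFPowerSeriesAt (Φ ∘ l) (p.compContinuousLinearMap l) 0 :=
      HasFPowerSeriesAt.compContinuousLinearMap (by rwa [map_zero])
    have hzero := ((L i).comp_hasFPowerSeriesOnBall hpl).hasFPowerSeriesAt.congr (hline i v)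
    have hn : L i (p n fun _ => (1 : 𝕜) • v) = 0 := hzero.apply_eq_zero n 1
    rwa [one_smul] at hn
  refine h0 ?_
  filter_upwards [hp.eventually_hasSum_sub] with y hy
  simp only [hdiag] at hy
  exact hy.unique hasSum_zero

theorem exists_prod_equiv [CompleteSpace 𝕜] [FiniteDimensional 𝕜 E] {v : E} (hv : v ≠ 0) :
    ∃ (W : Submodule 𝕜 E) (T : (W × 𝕜) ≃L[𝕜] E),
      Module.finrank 𝕜 W < Module.finrank 𝕜 E ∧ ∀ t : 𝕜, T (0, t) = t • v := by
  obtain ⟨W, hW⟩ := Submodule.exists_isCompl (𝕜 ∙ v)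
  let T : (W × 𝕜) ≃ₗ[𝕜] E :=
    ((LinearEquiv.refl 𝕜 W).prodCongr (LinearEquiv.toSpanNonzeroSingleton 𝕜 E v hv)).trans
      (Submodule.prodEquivOfIsCompl W (𝕜 ∙ v) hW.symm)
  refine ⟨W, T.toContinuousLinearEquiv, ?_, fun t => by simp [T]⟩
  rw [← T.finrank_eq, Module.finrank_prod, Module.finrank_self]
  exact Nat.lt_succ_self _

theorem exists_componentOperators_apply_eq_of_apply_ne_zero {Φ : E → B} (hΦ : AnalyticAt 𝕜 Φ 0)
    {i : ι} (hi : L i (Φ 0) ≠ 0) :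
    ∃ P ∈ componentOperators L, ∀ᶠ y in 𝓝 0, P y (Φ y) = Φ y := by
  have hLΦ : AnalyticAt 𝕜 (fun y => L i (Φ y)) 0 := ((L i).analyticAt _).fun_comp hΦ
  refine ⟨_, smulRight_mem_componentOperators i ((hLΦ.fun_inv hi).fun_smul hΦ), ?_⟩
  filter_upwards [hLΦ.continuousAt.eventually_ne hi] with y hy
  exact smul_inv_smul₀ hy _

theorem exists_componentOperators_apply_eq [CompleteSpace 𝕜] [CompleteSpace B]
    (hL : ∀ b, (∀ i, L i b = 0) → b = 0) {E : Type u} [NormedAddCommGroup E] [NormedSpace 𝕜 E]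
    [FiniteDimensional 𝕜 E] {Φ : E → B} (hΦ : AnalyticAt 𝕜 Φ 0) :
    ∃ P ∈ componentOperators L, ∀ᶠ y in 𝓝 0, P y (Φ y) = Φ y := by
  induction hn : Module.finrank 𝕜 E using Nat.strong_induction_on generalizing E with
  | _ n ih =>
  by_cases h0 : ∀ᶠ y in 𝓝 0, Φ y = 0
  · exact ⟨0, zero_mem _, h0.mono fun y hy => by rw [hy, map_zero]⟩
  obtain ⟨i, v, hv⟩ := exists_line_component_ne_zero hL hΦ h0
  rcases eq_or_ne v 0 with rfl | hv0
  · exact exists_componentOperators_apply_eq_of_apply_ne_zero hΦ (i := i) (by simpa using hv)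
  obtain ⟨W, T, hW, hT⟩ := exists_prod_equiv (𝕜 := 𝕜) hv0
  have hΦT : AnalyticAt 𝕜 (Φ ∘ T) 0 := AnalyticAt.comp (by rwa [map_zero]) (T.analyticAt 0)
  obtain ⟨P, hP, hPΦ⟩ := exists_componentOperators_apply_eq_prod
    (fun Ψ hΨ => ih _ (hn ▸ hW) hΨ rfl) hΦT (i := i) (by simpa [hT] using hv)
  refine ⟨_, comp_mem_componentOperators hP (T.symm : E →L[𝕜] W × 𝕜), ?_⟩
  filter_upwards [(T.symm.continuous.tendsto' _ _ (map_zero _)).eventually hPΦ] with y hy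
  simpa using hy

theorem exists_norm_apply_le_of_mem_componentOperators {P : E → B →L[𝕜] B}
    (hP : P ∈ componentOperators L) :
    ∃ (s : Finset ι) (C : ℝ), ∀ᶠ y in 𝓝 0, ∀ b r, 0 ≤ r → (∀ i ∈ s, ‖L i b‖ ≤ r) →
      ‖P y b‖ ≤ C * r := by
  classical
  induction hP using AddSubmonoid.closure_induction with
  | mem P hP =>
    obtain ⟨i, h, hh, rfl⟩ := hP
    refine ⟨{i}, ‖h 0‖ + 1, ?_⟩
    filter_upwards [hh.continuousAt.norm.eventually_lt_const (lt_add_one _)] with y hy b r _ hb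
    rw [ContinuousLinearMap.smulRight_apply, norm_smul, mul_comm]
    gcongr
    exact hb i (Finset.mem_singleton_self i)
  | zero => exact ⟨∅, 0, by simp⟩
  | add P Q _ _ hP hQ =>
    obtain ⟨s, C, hs⟩ := hP
    obtain ⟨t, D, ht⟩ := hQ
    refine ⟨s ∪ t, C + D, ?_⟩
    filter_upwards [hs, ht] with y hsy hty b r hr hb
    rw [add_mul]
    exact (norm_add_le _ _).trans (add_le_add
      (hsy b r hr fun i hi => hb i (Finset.mem_union_left t hi))
      (hty b r hr fun i hi => hb i (Finset.mem_union_right s hi)))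

theorem exists_finset_norm_le_component [CompleteSpace 𝕜] [CompleteSpace B]
    (hL : ∀ b, (∀ i, L i b = 0) → b = 0) {E : Type u} [NormedAddCommGroup E] [NormedSpace 𝕜 E]
    [FiniteDimensional 𝕜 E] {Φ : E → B} (hΦ : AnalyticAt 𝕜 Φ 0) :
    ∃ (s : Finset ι) (C : ℝ), ∀ᶠ y in 𝓝 0, Φ y ≠ 0 → ∃ i ∈ s, ‖Φ y‖ ≤ C * ‖L i (Φ y)‖ := by
  obtain ⟨P, hP, hPΦ⟩ := exists_componentOperators_apply_eq hL hΦ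
  obtain ⟨s, C, hs⟩ := exists_norm_apply_le_of_mem_componentOperators hP
  refine ⟨s, C, ?_⟩
  filter_upwards [hPΦ, hs] with y hy hbound hy0
  have hne : s.Nonempty := by
    by_contra! rfl
    exact hy0 (by simpa [hy] using hbound (Φ y) 0 le_rfl)
  obtain ⟨i, hi, hmax⟩ := s.exists_max_image (fun i => ‖L i (Φ y)‖) hne
  refine ⟨i, hi, ?_⟩
  simpa only [hy] using hbound (Φ y) _ (norm_nonneg _) hmax

end componentOperators

/-! ### Counting zeros -/

theorem encard_zeros_le_encard_zeros_deriv {g : ℝ → ℝ} {s : Set ℝ} (hs : s.OrdConnected)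
    (hg : ContinuousOn g s) :
    {x ∈ s | g x = 0}.encard ≤ {x ∈ s | deriv g x = 0}.encard + 1 := by
  rcases {x ∈ s | deriv g x = 0}.finite_or_infinite with hfin | hinf
  · refine ENat.forall_natCast_le_iff_le.1 fun k hk => ?_
    obtain ⟨Z, hZ, rfl⟩ : ∃ Z : Finset ℝ, (Z : Set ℝ) ⊆ {x ∈ s | g x = 0} ∧ Z.card = k := by
      obtain ⟨Z, hZ, hZk⟩ := exists_subset_encard_eq hk
      lift Z to Finset ℝ using finite_of_encard_eq_coe hZk
      exact ⟨Z, hZ, by simpa using hZk⟩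
    rw [hfin.encard_eq_coe_toFinset_card]
    refine mod_cast Finset.card_le_of_interleaved fun x hx y hy hxy _ => ?_
    obtain ⟨hxs, hgx⟩ := hZ hx
    obtain ⟨hys, hgy⟩ := hZ hy
    obtain ⟨c, hc, hgc⟩ := exists_deriv_eq_zero hxy (hg.mono (hs.out hxs hys)) (hgx.trans hgy.symm)
    exact ⟨c, hfin.mem_toFinset.2 ⟨hs.out hxs hys (Ioo_subset_Icc_self hc), hgc⟩, hc⟩
  · simp [hinf.encard_eq]

theorem encard_zeros_le_encard_zeros_iteratedDeriv {g : ℝ → ℝ} {s : Set ℝ} (hs : s.OrdConnected)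
    {n : ℕ} (hg : ∀ k < n, ContinuousOn (iteratedDeriv k g) s) :
    {x ∈ s | g x = 0}.encard ≤ {x ∈ s | iteratedDeriv n g x = 0}.encard + n := by
  induction n with
  | zero => simp
  | succ n ih =>
    have hrolle := encard_zeros_le_encard_zeros_deriv hs (hg n n.lt_succ_self)
    rw [← iteratedDeriv_succ] at hrolle
    calc {x ∈ s | g x = 0}.encard
        ≤ {x ∈ s | iteratedDeriv n g x = 0}.encard + n :=
          ih fun k hk => hg k (hk.trans n.lt_succ_self)
      _ ≤ {x ∈ s | iteratedDeriv (n + 1) g x = 0}.encard + 1 + n := by gcongr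
      _ = _ := by push_cast; ring

theorem iteratedDeriv_clm_apply_const {n : ℕ} {u : 𝕜 → E →L[𝕜] B} {t : 𝕜}
    (hu : ContDiffAt 𝕜 n u t) (x : E) :
    iteratedDeriv n (fun t => u t x) t = iteratedDeriv n u t x := by
  have h := (ContinuousLinearMap.apply 𝕜 B x).iteratedFDeriv_comp_left hu le_rfl
  simp only [iteratedDeriv_eq_iteratedFDeriv]
  exact congrArg (fun m => m fun _ => (1 : 𝕜)) h

namespace BoundedSeq

theorem iteratedDeriv_eval_zero [CompleteSpace B] (n : ℕ) :
    iteratedDeriv n (eval : 𝕜 → BoundedSeq B →L[𝕜] B) 0 = (n.factorial : 𝕜) • coeff 𝕜 n := by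
  obtain ⟨r, hr⟩ := hasFPowerSeriesAt_eval (𝕜 := 𝕜) (B := B)
  rw [iteratedDeriv_eq_iteratedFDeriv, ← hr.factorial_smul (1 : 𝕜) n]
  simp [evalSeries, Nat.cast_smul_eq_nsmul]

theorem eventually_iteratedDeriv_eval_apply_ne_zero [CharZero 𝕜] [CompleteSpace B] (n : ℕ) (C : ℝ) :
    ∀ᶠ t in 𝓝 (0 : 𝕜), ∀ c : BoundedSeq B, c ≠ 0 → ‖c‖ ≤ C * ‖c n‖ →
      iteratedDeriv n eval t c ≠ 0 := by
  let D : 𝕜 → BoundedSeq B →L[𝕜] B := iteratedDeriv n eval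
  have hD0 : D 0 = (n.factorial : 𝕜) • coeff 𝕜 n := iteratedDeriv_eval_zero n
  have hD : ContinuousAt D 0 := by
    simpa only [D, iteratedDeriv_eq_iterate] using
      (analyticAt_eval.iterated_deriv n).continuousAt
  have hcont : ContinuousAt (fun t => C * ‖D 0 - D t‖) 0 :=
    continuousAt_const.mul (continuousAt_const.sub hD).norm
  have hclose : ∀ᶠ t in 𝓝 0, C * ‖D 0 - D t‖ < ‖(n.factorial : 𝕜)‖ := by
    refine hcont.eventually_lt_const ?_
    simpa only [sub_self, norm_zero, mul_zero, norm_pos_iff, ne_eq, Nat.cast_eq_zero] using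
      n.factorial_ne_zero
  filter_upwards [hclose] with t ht c hc hcn hzero
  have hC : 0 < C := pos_of_mul_pos_left ((norm_pos_iff.2 hc).trans_le hcn) (norm_nonneg _)
  refine lt_irrefl (‖(n.factorial : 𝕜)‖ * ‖c‖) ?_
  calc ‖(n.factorial : 𝕜)‖ * ‖c‖ ≤ ‖(n.factorial : 𝕜)‖ * (C * ‖c n‖) := by gcongr
    _ = C * ‖(D 0 - D t) c‖ := by
      rw [sub_apply, show D t c = 0 from hzero, sub_zero, hD0, smul_apply, coeff_apply, norm_smul]
      ring
    _ ≤ C * (‖D 0 - D t‖ * ‖c‖) := by gcongr; exact (D 0 - D t).le_opNorm c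
    _ = C * ‖D 0 - D t‖ * ‖c‖ := by ring
    _ < ‖(n.factorial : 𝕜)‖ * ‖c‖ := by gcongr

theorem exists_encard_zeros_eval_le (n : ℕ) (C : ℝ) :
    ∃ δ > 0, ∀ c : BoundedSeq ℝ, c ≠ 0 → ‖c‖ ≤ C * ‖c n‖ →
      {t ∈ Metric.ball (0 : ℝ) δ | eval t c = 0}.encard ≤ n := by
  obtain ⟨δ, hδ, hball⟩ := Metric.eventually_nhds_iff_ball.1
    ((eventually_iteratedDeriv_eval_apply_ne_zero (𝕜 := ℝ) (B := ℝ) n C).and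
      (analyticAt_eval (𝕜 := ℝ) (B := ℝ)).eventually_analyticAt)
  refine ⟨δ, hδ, fun c hc hcn => ?_⟩
  have hderiv : ∀ k, ∀ t ∈ Metric.ball (0 : ℝ) δ,
      iteratedDeriv k (fun t => eval t c) t = iteratedDeriv k eval t c := fun k t ht =>
    iteratedDeriv_clm_apply_const (hball t ht).2.contDiffAt c
  have hcont : ∀ k, ContinuousOn (iteratedDeriv k fun t => eval t c) (Metric.ball (0 : ℝ) δ) := by
    intro k t ht
    have han : AnalyticAt ℝ (fun t => eval t c) t :=
      analyticAt_clm_apply (hball t ht).2 analyticAt_const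
    rw [iteratedDeriv_eq_iterate]
    exact (han.iterated_deriv k).continuousAt.continuousWithinAt
  have hnone : {t ∈ Metric.ball (0 : ℝ) δ | iteratedDeriv n (fun t => eval t c) t = 0} = ∅ :=
    Set.eq_empty_of_forall_notMem fun t ht =>
      (hball t ht.1).1 c hc hcn ((hderiv n t ht.1).symm.trans ht.2)
  simpa only [hnone, encard_empty, zero_add] using
    encard_zeros_le_encard_zeros_iteratedDeriv (convex_ball (0 : ℝ) δ).ordConnected
      fun k (_ : k < n) => hcont k

end BoundedSeq

open BoundedSeq in
theorem exists_encard_zeros_le {E : Type*} [NormedAddCommGroup E] [NormedSpace ℝ E]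
    [FiniteDimensional ℝ E] {Φ : E × ℝ → ℝ} (hΦ : AnalyticAt ℝ Φ 0) :
    ∃ η > 0, ∃ p : ℕ, ∀ y ∈ Metric.ball (0 : E) η,
      (∀ t ∈ Metric.ball (0 : ℝ) η, Φ (y, t) = 0) ∨
        {t ∈ Metric.ball (0 : ℝ) η | Φ (y, t) = 0}.encard ≤ p := by
  obtain ⟨ρ, ⟨Ψ, hΨ, hΦΨ⟩, hρ⟩ :=
    ((eventually_exists_curry hΦ).and eventually_mem_nhdsWithin).exists
  obtain ⟨s, C, hdom⟩ := exists_finset_norm_le_component (L := coeff ℝ)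
    (fun _ hc => DFunLike.ext _ _ hc) hΨ
  choose δ hδ hcount using fun n => exists_encard_zeros_eval_le n C
  have hδs : ∀ᶠ z in 𝓝 (0 : E × ℝ), ∀ n ∈ s, z.2 / ρ ∈ Metric.ball 0 (δ n) := by
    refine (Finset.eventually_all s).2 fun n _ => ?_
    have hcont : ContinuousAt (fun z : E × ℝ => z.2 / ρ) 0 := by fun_prop
    exact hcont.eventually_mem (by simpa using Metric.ball_mem_nhds (0 : ℝ) (hδ n))
  have hfst : Tendsto (Prod.fst : E × ℝ → E) (𝓝 0) (𝓝 0) := continuous_fst.tendsto' _ _ rfl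
  obtain ⟨η, hη, hball⟩ := Metric.eventually_nhds_iff_ball.1
    (hΦΨ.and (hδs.and (hfst.eventually hdom)))
  have hmem : ∀ y ∈ Metric.ball (0 : E) η, ∀ t ∈ Metric.ball (0 : ℝ) η,
      (y, t) ∈ Metric.ball (0 : E × ℝ) η := fun y hy t ht =>
    ball_prod_same (0 : E) (0 : ℝ) η ▸ mk_mem_prod hy ht
  refine ⟨η, hη, s.sup id, fun y hy => ?_⟩
  by_cases h0 : Ψ y = 0
  · left
    intro t ht
    rw [(hball _ (hmem y hy t ht)).1, h0, map_zero]
  · right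
    obtain ⟨n, hn, hle⟩ := (hball _ (hmem y hy 0 (Metric.mem_ball_self hη))).2.2 h0
    have hmaps : MapsTo (· / ρ) {t ∈ Metric.ball (0 : ℝ) η | Φ (y, t) = 0}
        {t ∈ Metric.ball (0 : ℝ) (δ n) | eval t (Ψ y) = 0} := fun t ht =>
      have h := hball _ (hmem y hy t ht.1)
      ⟨h.2.1 n hn, h.1.symm.trans ht.2⟩
    calc _ ≤ _ := encard_le_encard_of_injOn hmaps fun _ _ _ _ => (div_left_inj' hρ).1
      _ ≤ n := hcount n (Ψ y) h0 hle
      _ ≤ (s.sup id : ℕ) := mod_cast s.le_sup (f := id) hn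

theorem exists_encard_levels_le {E : Type*} [NormedAddCommGroup E] [NormedSpace ℝ E]
    [FiniteDimensional ℝ E] {f : E × ℝ → ℝ} (hf : AnalyticAt ℝ f 0) :
    ∃ η > 0, ∃ p : ℕ, ∀ y ∈ Metric.ball (0 : E) η, ∀ s,
      (∀ t ∈ Metric.ball (0 : ℝ) η, f (y, t) = s) ∨
        {t ∈ Metric.ball (0 : ℝ) η | f (y, t) = s}.encard ≤ p := by
  have hΦ : AnalyticAt ℝ (fun z : (E × ℝ) × ℝ => f (z.1.1, z.2) - f 0 - z.1.2) 0 :=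
    ((AnalyticAt.fun_comp (g := f) (f := fun z : (E × ℝ) × ℝ => (z.1.1, z.2)) hf
      ((analyticAt_fst.fun_comp analyticAt_fst).prod analyticAt_snd)).fun_sub
        analyticAt_const).fun_sub (analyticAt_snd.fun_comp analyticAt_fst)
  obtain ⟨η₁, hη₁, p, hp⟩ := exists_encard_zeros_le hΦ
  obtain ⟨η₂, hη₂, hclose⟩ := Metric.continuousAt_iff.1 hf.continuousAt η₁ hη₁
  have hsub : Metric.ball (0 : ℝ) (min η₁ η₂) ⊆ Metric.ball 0 η₁ :=
    Metric.ball_subset_ball (min_le_left _ _)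
  refine ⟨min η₁ η₂, lt_min hη₁ hη₂, p, fun y hy s => ?_⟩
  by_cases hs : s - f 0 ∈ Metric.ball 0 η₁
  · have hlevel : ∀ t, f (y, t) - f 0 - (s - f 0) = 0 ↔ f (y, t) = s := fun t => by
      rw [sub_sub_sub_cancel_right, sub_eq_zero]
    have hys : (y, s - f 0) ∈ Metric.ball (0 : E × ℝ) η₁ := ball_prod_same (0 : E) (0 : ℝ) η₁ ▸
      mk_mem_prod (Metric.ball_subset_ball (min_le_left _ _) hy) hs
    have hzeros := hp _ hys
    simp only [hlevel] at hzeros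
    refine hzeros.imp (fun h t ht => h t (hsub ht)) fun h => le_trans ?_ h
    exact encard_le_encard fun t ht => ⟨hsub ht.1, ht.2⟩
  · right
    have hnone : {t ∈ Metric.ball (0 : ℝ) (min η₁ η₂) | f (y, t) = s} = ∅ := by
      refine eq_empty_of_forall_notMem ?_
      rintro t ⟨ht, rfl⟩
      refine hs (mem_ball_zero_iff.2 (hclose ?_))
      have hyt := ball_prod_same (0 : E) (0 : ℝ) _ ▸ mk_mem_prod hy ht
      exact Metric.ball_subset_ball (min_le_right _ _) hyt
    rw [hnone, encard_empty]
    exact zero_le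

theorem stmt4_general {E : Type*} [NormedAddCommGroup E] [NormedSpace ℝ E]
    [FiniteDimensional ℝ E] {f : E × ℝ → ℝ} (hf : AnalyticAt ℝ f 0) :
    ∃ η > (0 : ℝ), ∃ p : ℕ, 0 < p ∧ ∀ x' ∈ Metric.ball (0 : E) η, ∀ s : ℝ,
      (∀ t : ℝ, |t| < η → f (x', t) = s) ∨
        ∃ T : Finset ℝ, T.card ≤ p ∧ ∀ t : ℝ, |t| < η → f (x', t) = s → t ∈ T := by
  obtain ⟨η, hη, p, hp⟩ := exists_encard_levels_le hf
  refine ⟨η, hη, p + 1, p.succ_pos, fun x' hx' s => ?_⟩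
  simp only [mem_ball_zero_iff, Real.norm_eq_abs] at hp hx'
  refine (hp x' hx' s).imp_right fun hcard => ?_
  have hfin := finite_of_encard_le_coe hcard
  rw [hfin.encard_eq_coe_toFinset_card, Nat.cast_le] at hcard
  exact ⟨hfin.toFinset, hcard.trans p.le_succ, fun t ht hts => hfin.mem_toFinset.2 ⟨ht, hts⟩⟩

/-- **Corollary 2.1.1.** Let `f` be real analytic on a neighborhood `U` of the origin of
`ℝⁿ = ℝ^{n-1} × ℝ` (with `m = n - 1`), not identically zero near the origin. Then there are
`η > 0` and a positive integer `p` such that for every `x'` in the `(n-1)`-dimensional ball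
`B(0,η)` and every `s ∈ ℝ`, either `f(x', xₙ) = s` for all `|xₙ| < η`, or the equation
`f(x', xₙ) = s` has at most `p` solutions `xₙ` with `|xₙ| < η`. -/
theorem stmt4 (m : ℕ) (f : EuclideanSpace ℝ (Fin m) × ℝ → ℝ)
    (U : Set (EuclideanSpace ℝ (Fin m) × ℝ))
    (hU : U ∈ nhds (0 : EuclideanSpace ℝ (Fin m) × ℝ))
    (hf : AnalyticOnNhd ℝ f U)
    (hnz : ¬ ∀ᶠ x in nhds (0 : EuclideanSpace ℝ (Fin m) × ℝ), f x = 0) :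
    ∃ η > (0 : ℝ), ∃ p : ℕ, 0 < p ∧
      ∀ x' ∈ Metric.ball (0 : EuclideanSpace ℝ (Fin m)) η, ∀ s : ℝ,
        (∀ t : ℝ, |t| < η → f (x', t) = s) ∨
        ∃ T : Finset ℝ, T.card ≤ p ∧ ∀ t : ℝ, |t| < η → f (x', t) = s → t ∈ T :=
  stmt4_general (hf 0 (mem_of_mem_nhds hU))
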